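/- arXiv:1909.04484 — 2 statements merged into one kernel-verified Lean document; each statement's English description precedes it below -/
import Mathlib

section
/- For every C > 0 and every δ > 0 there exists β with 2 < β < 2 + δ such that 1/2 − E(β) > C·(β − 2). Equivalently, there is a sequence β_k → 2⁺ and constants c_k → ∞ with |E(β_k) − 1/2| > c_k·|β_k − 2|; in particular β ↦ E(β) is not Lipschitz continuous at β = 2. -/
/-- The orbit of `1` under the β-map `T_β(x) = βx mod 1`: `t₀ = 1`,
`t_{n+1} = β t_n − ⌊β t_n⌋`. -/
noncomputable def betaOrbit (β : ℝ) : ℕ → ℝ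
  | 0 => 1
  | n + 1 => Int.fract (β * betaOrbit β n)

/-- `E(β) = (∑ t_n(β)²/(2βⁿ)) / (∑ t_n(β)/βⁿ)`, the expectation of the unique acim of
the β-map. -/
noncomputable def Ebeta (β : ℝ) : ℝ :=
  (∑' n : ℕ, (betaOrbit β n) ^ 2 / (2 * β ^ n)) / (∑' n : ℕ, betaOrbit β n / β ^ n)

/-- `ψ^ε(β) = 2 + ε F(1/E(β) − 2)`. -/
noncomputable def psi (ε : ℝ) (F : ℝ → ℝ) (β : ℝ) : ℝ :=
  2 + ε * F (1 / Ebeta β - 2)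

theorem orbit_bounds (β : ℝ) (n : ℕ) : 0 ≤ betaOrbit β n ∧ betaOrbit β n ≤ 1 := by
  cases n with
  | zero => simp [betaOrbit]
  | succ n => exact ⟨Int.fract_nonneg _, (Int.fract_lt_one _).le⟩

theorem orbit_eq (β : ℝ) (h2 : 2 < β) (h3 : β < 3) (K : ℕ) (hK : (β - 2) * β ^ K ≤ 1 / 2)
    (n : ℕ) (hn : n ≤ K) : betaOrbit β (n + 1) = (β - 2) * β ^ n := by
  induction n with
  | zero =>
    simp only [betaOrbit, mul_one, pow_zero]
    rw [Int.fract_eq_iff]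
    exact ⟨by linarith, by linarith, 2, by push_cast; ring⟩
  | succ n ih =>
    have h := ih (by omega)
    have e : betaOrbit β (n + 1 + 1) = Int.fract (β * betaOrbit β (n + 1)) := rfl
    rw [e, h, show β * ((β - 2) * β ^ n) = (β - 2) * β ^ (n + 1) by ring, Int.fract_eq_self]
    have hp : β ^ (n + 1) ≤ β ^ K := pow_le_pow_right₀ (by linarith) hn
    have hp0 : 0 < β ^ (n + 1) := by positivity
    have h0 : 0 < β - 2 := by linarith
    refine ⟨by positivity, ?_⟩
    have := mul_le_mul_of_nonneg_left hp h0.le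
    linarith

theorem main_bound (β C : ℝ) (h2 : 2 < β) (h3 : β < 3) (hC : 0 < C) (K : ℕ)
    (hK : (β - 2) * β ^ K ≤ 1 / 2) (hKC : 24 * C < K) :
    C * (β - 2) < 1/2 - Ebeta β := by
  have hb : 0 < β := by linarith
  have h0 : 0 < β - 2 := by linarith
  have hle : ∀ n, betaOrbit β n / β ^ n ≤ (1 / 2 : ℝ) ^ n := by
    intro n
    have h1 : (2 : ℝ) ^ n ≤ β ^ n := pow_le_pow_left₀ (by norm_num) h2.le n
    rw [one_div_pow]
    exact div_le_div₀ zero_le_one (orbit_bounds β n).2 (by positivity) h1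
  have hnn : ∀ n, 0 ≤ betaOrbit β n / β ^ n := fun n =>
    div_nonneg (orbit_bounds β n).1 (by positivity)
  have hsD : Summable (fun n => betaOrbit β n / β ^ n) :=
    Summable.of_nonneg_of_le hnn hle summable_geometric_two
  have hsN : Summable (fun n => (betaOrbit β n) ^ 2 / (2 * β ^ n)) := by
    refine Summable.of_nonneg_of_le (fun n => by positivity) (fun n => ?_) hsD
    have := orbit_bounds β n
    have hp : 0 < β ^ n := by positivity
    exact div_le_div₀ this.1 (by nlinarith) hp (by linarith)
  have hD2 : ∑' n, betaOrbit β n / β ^ n ≤ 2 := by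
    rw [← tsum_geometric_two]
    exact hsD.tsum_le_tsum hle summable_geometric_two
  have hD1 : 1 ≤ ∑' n, betaOrbit β n / β ^ n := by
    have := hsD.le_tsum 0 (fun n _ => hnn n)
    simpa [betaOrbit] using this
  have hsB := (hsD.mul_left (1 / 2)).sub hsN
  have hB := (hsD.mul_left (1 / 2)).tsum_sub hsN
  rw [tsum_mul_left] at hB
  have hbn : ∀ n, 0 ≤ 1 / 2 * (betaOrbit β n / β ^ n) - (betaOrbit β n) ^ 2 / (2 * β ^ n) := by
    intro n
    have := orbit_bounds β n
    have e : 1 / 2 * (betaOrbit β n / β ^ n) - (betaOrbit β n) ^ 2 / (2 * β ^ n)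
      = betaOrbit β n * (1 - betaOrbit β n) / (2 * β ^ n) := by field_simp
    rw [e]
    exact div_nonneg (mul_nonneg this.1 (by linarith)) (by positivity)
  have hlow := hsB.sum_le_tsum (Finset.range (K + 1)) (fun n _ => hbn n)
  rw [Finset.sum_range_succ'] at hlow
  have hterm : ∀ n ∈ Finset.range K, (β - 2) / 12 ≤ 1 / 2 * (betaOrbit β (n + 1) / β ^ (n + 1))
      - (betaOrbit β (n + 1)) ^ 2 / (2 * β ^ (n + 1)) := by
    intro n hn
    have hn' : n ≤ K := (Finset.mem_range.1 hn).le
    rw [orbit_eq β h2 h3 K hK n hn']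
    have hp : β ^ n ≤ β ^ K := pow_le_pow_right₀ (by linarith) hn'
    have hs := mul_le_mul_of_nonneg_left hp h0.le
    have e : 1 / 2 * ((β - 2) * β ^ n / β ^ (n + 1)) - ((β - 2) * β ^ n) ^ 2 / (2 * β ^ (n + 1))
      = (β - 2) * (1 - (β - 2) * β ^ n) / (2 * β) := by
      have : β ^ n ≠ 0 := by positivity
      rw [pow_succ]
      field_simp
    rw [e, div_le_div_iff₀ (by norm_num) (by positivity)]
    nlinarith
  have hsum := Finset.card_nsmul_le_sum _ _ _ hterm
  rw [Finset.card_range, nsmul_eq_mul] at hsum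
  have hb0 := hbn 0
  unfold Ebeta
  set D := ∑' n, betaOrbit β n / β ^ n
  set N := ∑' n, (betaOrbit β n) ^ 2 / (2 * β ^ n)
  have hD : 0 < D := by linarith
  have hfin : K * ((β - 2) / 12) ≤ 1 / 2 * D - N := by linarith
  have e : 1 / 2 - N / D = (1 / 2 * D - N) / D := by field_simp
  rw [e, lt_div_iff₀ hD]
  have h5 : C * (β - 2) * D ≤ C * (β - 2) * 2 := mul_le_mul_of_nonneg_left hD2 (by positivity)
  nlinarith

/-- `β ↦ E(β)` is not Lipschitz at `β = 2`: for every `C > 0` there are `β`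
arbitrarily close to `2` with `1/2 − E(β) > C (β − 2)`. -/
theorem stmt8 (C : ℝ) (hC : 0 < C) (δ : ℝ) (hδ : 0 < δ) :
    ∃ β : ℝ, 2 < β ∧ β < 2 + δ ∧ C * (β - 2) < 1/2 - Ebeta β := by
  obtain ⟨K, hK⟩ := exists_nat_gt (24 * C)
  have h3 : (0 : ℝ) < 3 ^ K := by positivity
  have h31 : (1 : ℝ) ≤ 3 ^ K := one_le_pow₀ (by norm_num)
  obtain ⟨ε, hε, h1, h2⟩ : ∃ ε : ℝ, 0 < ε ∧ ε < δ ∧ ε * 3 ^ K ≤ 1 / 2 := by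
    refine ⟨min (δ / 2) (1 / 2 / 3 ^ K), by positivity, ?_, ?_⟩
    · exact (min_le_left _ _).trans_lt (by linarith)
    · rw [← le_div_iff₀ h3]
      exact min_le_right _ _
  have hε1 : ε < 1 := by nlinarith
  refine ⟨2 + ε, by linarith, by linarith, main_bound _ C (by linarith) (by linarith) hC K ?_ hK⟩
  have hp : (2 + ε) ^ K ≤ 3 ^ K := pow_le_pow_left₀ (by linarith) (by linarith) K
  have := mul_le_mul_of_nonneg_left hp hε.le
  rw [add_sub_cancel_left]
  linarith
end

section
/- Assume F ∈ C¹(ℝ,ℝ) with F(0) = 0 and F′(x) = O(1/|log x|) as x → 0⁺. Then there exist δ = δ(F) > 0 and M = M(F) > 0 such that for every ε ≥ 0 and every β with 2 < β < 2 + δ, |ψ^ε(β) − 2| ≤ ε·M·(β − 2). -/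
lemma betaOrbit_nonneg (β : ℝ) (n : ℕ) : 0 ≤ betaOrbit β n := by
  cases n with
  | zero => simp [betaOrbit]
  | succ n => simpa [betaOrbit] using Int.fract_nonneg _

lemma betaOrbit_le_one (β : ℝ) (n : ℕ) : betaOrbit β n ≤ 1 := by
  cases n with
  | zero => simp [betaOrbit]
  | succ n => simpa [betaOrbit] using (Int.fract_lt_one _).le

lemma betaOrbit_le (β : ℝ) (h2 : 2 < β) (h3 : β < 3) (n : ℕ) :
    betaOrbit β (n + 1) ≤ (β - 2) * β ^ n := by
  induction n with
  | zero =>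
    have hfl : ⌊β⌋ = 2 := by
      rw [Int.floor_eq_iff]; constructor <;> push_cast <;> linarith
    simp [betaOrbit, Int.fract, hfl]
  | succ n ih =>
    have h0 : 0 ≤ β * betaOrbit β (n + 1) := mul_nonneg (by linarith) (betaOrbit_nonneg _ _)
    have h1 : betaOrbit β (n + 1 + 1) ≤ β * betaOrbit β (n + 1) := by
      have hfl : (0 : ℝ) ≤ (⌊β * betaOrbit β (n + 1)⌋ : ℝ) := by
        exact_mod_cast Int.floor_nonneg.mpr h0
      have : betaOrbit β (n + 1 + 1) = Int.fract (β * betaOrbit β (n + 1)) := rfl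
      rw [this, Int.fract]
      linarith
    calc _ ≤ _ := h1
      _ ≤ β * ((β - 2) * β ^ n) := mul_le_mul_of_nonneg_left ih (by linarith)
      _ = _ := by ring

lemma inv_pow_le_half (β : ℝ) (h2 : 2 < β) (n : ℕ) : 1 / β ^ n ≤ (1 / 2) ^ n := by
  rw [one_div_pow]
  exact one_div_le_one_div_of_le (by positivity) (pow_le_pow_left₀ (by norm_num) h2.le n)

lemma X_bound (β : ℝ) (h2 : 2 < β) (h3 : β < 3) (k : ℕ) :
    0 ≤ 1 / Ebeta β - 2 ∧ 1 / Ebeta β - 2 ≤ k * (β - 2) + 2 * (1 / 2) ^ k := by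
  have hp : ∀ n : ℕ, 0 < β ^ n := fun n => pow_pos (by linarith) n
  have ht0 := betaOrbit_nonneg β
  have ht1 := betaOrbit_le_one β
  have hgeo : Summable (fun n : ℕ => ((1 : ℝ) / 2) ^ n) := summable_geometric_two
  have hsq : ∀ n, betaOrbit β n ^ 2 ≤ 1 := fun n => pow_le_one₀ (ht0 n) (ht1 n)
  have hD : Summable (fun n : ℕ => betaOrbit β n / β ^ n) := by
    refine Summable.of_nonneg_of_le (fun n => div_nonneg (ht0 n) (hp n).le) (fun n => ?_) hgeo
    exact (div_le_div_of_nonneg_right (ht1 n) (hp n).le).trans (inv_pow_le_half β h2 n)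
  have hN : Summable (fun n : ℕ => betaOrbit β n ^ 2 / (2 * β ^ n)) := by
    refine Summable.of_nonneg_of_le
      (fun n => div_nonneg (sq_nonneg _) (by linarith [hp n])) (fun n => ?_) hgeo
    calc _ ≤ betaOrbit β n ^ 2 / β ^ n :=
          div_le_div_of_nonneg_left (sq_nonneg _) (hp n) (by linarith [hp n])
      _ ≤ 1 / β ^ n := div_le_div_of_nonneg_right (hsq n) (hp n).le
      _ ≤ _ := inv_pow_le_half β h2 n
  set D := ∑' n : ℕ, betaOrbit β n / β ^ n with hDdef
  set N := ∑' n : ℕ, betaOrbit β n ^ 2 / (2 * β ^ n) with hNdef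
  let a : ℕ → ℝ := fun n => betaOrbit β n / β ^ n - 2 * (betaOrbit β n ^ 2 / (2 * β ^ n))
  have ha : Summable a := hD.sub (hN.mul_left 2)
  have hsum : ∑' n, a n = D - 2 * N := by
    rw [hDdef, hNdef, ← tsum_mul_left, ← hD.tsum_sub (hN.mul_left 2)]
  have haeq : ∀ n, a n = betaOrbit β n * (1 - betaOrbit β n) / β ^ n := fun n => by
    have := (hp n).ne'
    simp only [a]; field_simp
  have ha0 : ∀ n, 0 ≤ a n := fun n => by
    rw [haeq]
    exact div_nonneg (mul_nonneg (ht0 n) (by linarith [ht1 n])) (hp n).le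
  have hale : ∀ n, a n ≤ betaOrbit β n / β ^ n := fun n => by
    rw [haeq]
    exact div_le_div_of_nonneg_right (by nlinarith [ht0 n]) (hp n).le
  have hN2 : 1 / 2 ≤ N := by
    have := hN.le_tsum 0 (fun n _ => div_nonneg (sq_nonneg _) (by linarith [hp n]))
    simpa [betaOrbit] using this
  have hfin : ∑ n ∈ Finset.range (k + 1), a n ≤ k * ((β - 2) / 2) := by
    rw [Finset.sum_range_succ']
    have h0 : a 0 = 0 := by rw [haeq]; simp [betaOrbit]
    rw [h0, add_zero]
    have : ∀ n ∈ Finset.range k, a (n + 1) ≤ (β - 2) / 2 := fun n _ => by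
      refine (hale _).trans ?_
      rw [div_le_iff₀ (hp _), pow_succ]
      have h1 := betaOrbit_le β h2 h3 n
      have h4 : 0 ≤ (β - 2) * β ^ n * (β - 2) :=
        mul_nonneg (mul_nonneg (by linarith) (hp n).le) (by linarith)
      nlinarith
    simpa using Finset.sum_le_sum this
  have htail : ∑' n, a (n + (k + 1)) ≤ (1 / 2) ^ k := by
    have hs : HasSum (fun n : ℕ => ((1 : ℝ) / 2) ^ n * (1 / 2) ^ (k + 1)) (2 * (1 / 2) ^ (k + 1)) :=
      hasSum_geometric_two.mul_right _
    have hle := ((summable_nat_add_iff (k + 1)).mpr ha).tsum_le_tsum (g := fun n : ℕ =>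
      ((1 : ℝ) / 2) ^ n * (1 / 2) ^ (k + 1)) (fun n => by
        rw [← pow_add]
        exact ((hale _).trans (div_le_div_of_nonneg_right (ht1 _) (hp _).le)).trans
          (inv_pow_le_half β h2 _)) hs.summable
    rw [hs.tsum_eq] at hle
    refine hle.trans (le_of_eq ?_)
    rw [pow_succ]; ring
  have hsplit := ha.sum_add_tsum_nat_add (k + 1)
  rw [hsum] at hsplit
  have hnn : 0 ≤ D - 2 * N := hsum ▸ tsum_nonneg ha0
  have hX : 1 / Ebeta β - 2 = (D - 2 * N) / N := by
    have hN0 : N ≠ 0 := by linarith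
    have : Ebeta β = N / D := rfl
    rw [this, one_div_div]
    field_simp
  rw [hX]
  refine ⟨div_nonneg hnn (by linarith), ?_⟩
  rw [div_le_iff₀ (by linarith)]
  have hb : 0 ≤ k * (β - 2) + 2 * (1 / 2 : ℝ) ^ k := by
    have : 0 ≤ β - 2 := by linarith
    positivity
  nlinarith

/-- Lipschitz bound for `ψ^ε` at `β = 2` when `F'(x) = O(1/|log x|)` as `x → 0⁺`. -/
theorem stmt9 (F : ℝ → ℝ) (hF : ContDiff ℝ 1 F) (hF0 : F 0 = 0)
    (hF' : ∃ C > (0:ℝ), ∃ x₀ ∈ Set.Ioo (0:ℝ) 1, ∀ x : ℝ, 0 < x → x < x₀ →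
      |deriv F x| ≤ C / |Real.log x|) :
    ∃ δ > (0:ℝ), ∃ M > (0:ℝ), ∀ ε : ℝ, 0 ≤ ε → ∀ β : ℝ, 2 < β → β < 2 + δ →
      |psi ε F β - 2| ≤ ε * M * (β - 2) := by
  obtain ⟨C, hC, x₀, ⟨hx0, hx1⟩, hb⟩ := hF'
  refine ⟨min (Real.exp (-80)) (x₀ ^ 2), lt_min (Real.exp_pos _) (by positivity),
    10 * C, by positivity, ?_⟩
  intro ε hε β h2 hβ
  obtain ⟨s, hs⟩ : ∃ s, s = β - 2 := ⟨_, rfl⟩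
  have hs0 : 0 < s := by linarith
  have hs1 : s < Real.exp (-80) := by
    have := min_le_left (Real.exp (-80)) (x₀ ^ 2); linarith
  have hs2 : s < x₀ ^ 2 := by
    have := min_le_right (Real.exp (-80)) (x₀ ^ 2); linarith
  obtain ⟨L, hL⟩ : ∃ L, L = -Real.log s := ⟨_, rfl⟩
  have hsL : s = Real.exp (-L) := by rw [hL, neg_neg, Real.exp_log hs0]
  have hL80 : 80 < L := by
    rw [hsL, Real.exp_lt_exp] at hs1; linarith
  have h3 : β < 3 := by nlinarith
  obtain ⟨hX0, hX⟩ := X_bound β h2 h3 ⌈2 * L⌉₊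
  have hk1 : (⌈2 * L⌉₊ : ℝ) < 2 * L + 1 := Nat.ceil_lt_add_one (by linarith)
  have hk2 : 2 * L ≤ (⌈2 * L⌉₊ : ℝ) := Nat.le_ceil _
  generalize ⌈2 * L⌉₊ = k at *
  generalize hXd : 1 / Ebeta β - 2 = X at *
  rw [← hs] at hX
  have hpow : ((1 : ℝ) / 2) ^ k ≤ s := by
    have h1 : ((1 : ℝ) / 2) = Real.exp (-Real.log 2) := by
      rw [Real.exp_neg, Real.exp_log (by norm_num)]; norm_num
    rw [h1, ← Real.exp_nat_mul, hsL, Real.exp_le_exp]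
    nlinarith [Real.log_two_gt_d9]
  have hX5 : X ≤ 5 * L * s := by nlinarith
  have hsq : s = Real.exp (-L / 2) * Real.exp (-L / 2) := by
    rw [← Real.exp_add, hsL]; ring_nf
  have hE : 5 * L ≤ Real.exp (L / 2) := by
    have h1 : Real.exp (L / 2) = Real.exp (L / 4) * Real.exp (L / 4) := by
      rw [← Real.exp_add]; ring_nf
    have h4 := Real.add_one_le_exp (L / 4)
    nlinarith
  have hXe : X ≤ Real.exp (-L / 2) := by
    have h1 : Real.exp (L / 2) * Real.exp (-L / 2) = 1 := by
      rw [← Real.exp_add, ← Real.exp_zero]; ring_nf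
    have hpos := Real.exp_pos (-L / 2)
    calc X ≤ 5 * L * s := hX5
      _ ≤ Real.exp (L / 2) * s := mul_le_mul_of_nonneg_right hE hs0.le
      _ = Real.exp (L / 2) * Real.exp (-L / 2) * Real.exp (-L / 2) := by rw [hsq]; ring
      _ = _ := by rw [h1, one_mul]
  have hex0 : Real.exp (-L / 2) < x₀ := by
    have hpos := Real.exp_pos (-L / 2)
    by_contra hcon
    push Not at hcon
    nlinarith
  have hFX : |F X| ≤ 10 * C * s := by
    rcases hX0.eq_or_lt with h | hXpos
    · rw [← h, hF0, abs_zero]; positivity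
    · obtain ⟨c, ⟨hc0, hcX⟩, hc⟩ := exists_deriv_eq_slope F hXpos hF.continuous.continuousOn
        (hF.differentiable (by norm_num)).differentiableOn
      have hd := hb c hc0 (by linarith)
      have hlog : Real.log c ≤ -L / 2 := by
        rw [Real.log_le_iff_le_exp hc0]; linarith
      have habs : L / 2 ≤ |Real.log c| := by
        rw [abs_of_nonpos (by linarith)]; linarith
      have hd2 : |deriv F c| ≤ C / (L / 2) :=
        hd.trans (div_le_div_of_nonneg_left hC.le (by linarith) habs)
      have hFe : F X = deriv F c * X := by
        rw [hc, hF0]; field_simp; ring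
      rw [hFe, abs_mul, abs_of_pos hXpos]
      calc _ ≤ C / (L / 2) * (5 * L * s) := by gcongr
        _ = 10 * C * s := by
          have : L ≠ 0 := by linarith
          field_simp; ring
  have : psi ε F β - 2 = ε * F X := by rw [psi, hXd]; ring
  rw [this, abs_mul, abs_of_nonneg hε, ← hs, mul_assoc]
  exact mul_le_mul_of_nonneg_left hFX hε
end
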